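/- For every m ≥ 1, the exponential growth constant α_m = lim_{n→∞} (a_n^{(m)})^{1/n} exists; the growth constants satisfy α_m ≤ α_{m+1} for every m ≥ 1, and C_{m−1}^{1/(m+1)} ≤ α_m < 4 for every m ≥ 1, where C_j denotes the j-th Catalan number. Consequently lim_{m→∞} α_m = 4; more precisely, there exist a constant K > 0 and an integer M such that 0 < 4 − α_m ≤ K · (log m)/m for all m ≥ M. -/

import Mathlib

/-- `π` avoids the pattern 132: there are no indices `i < j < k` with `π i < π k < π j`. -/
def Avoids132 {n : ℕ} (π : Equiv.Perm (Fin n)) : Prop :=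
  ¬ ∃ i j k : Fin n, i < j ∧ j < k ∧ π i < π k ∧ π k < π j

/-- `π` is `m`-bounded: adjacent entries differ by at most `m`. -/
def MBounded (m : ℕ) {n : ℕ} (π : Equiv.Perm (Fin n)) : Prop :=
  ∀ i : ℕ, ∀ h : i + 1 < n,
    |(((π ⟨i + 1, h⟩ : Fin n) : ℕ) : ℤ) - (((π ⟨i, by omega⟩ : Fin n) : ℕ) : ℤ)| ≤ (m : ℤ)

/-- `a_n^{(m)}`: the number of `m`-bounded 132-avoiding permutations of length `n`. -/
noncomputable def aCount (m n : ℕ) : ℕ :=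
  Nat.card {π : Equiv.Perm (Fin n) // Avoids132 π ∧ MBounded m π}

/-!
Splitting at the maximum turns a 132-avoiding permutation into a binary tree, and `m`-boundedness
into a condition on the left and right subtrees of each node. Follow the path from the root that
enters the right subtree whenever it is nonempty: each step drops at most `m` nodes, so a tree can
be cut along this path at any prescribed size up to an error less than `m`. Hence
`a (i + j) ≤ m * a i * a (j + m)`, and Fekete's lemma gives the limit `α` together with
`α ^ k ≤ m * a (k + m)` for every `k ≠ 0`. Since `a n ≤ catalan n ≤ 4 ^ n / (n + 1)`, a large `k`
shows `α < 4`.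

Conversely a tree with at most `m + 1` nodes is automatically `m`-bounded, so arbitrary trees with
`m - 1` nodes can be stacked, at the cost of two more nodes each, whence
`catalan (m - 1) ^ q ≤ a (q * (m + 1) + 1)`. As `catalan k` is `4 ^ k` up to a polynomial factor,
taking roots yields `4 - α = O(log m / m)`.
-/

open BinaryTree Filter Topology

/-! ### Words of permutations avoiding 132 -/

/-- The list form of `Avoids132`. -/
def ListAvoids132 (l : List ℕ) : Prop :=
  l.Triplewise fun a b c => ¬ (a < c ∧ c < b)

/-- The one-line notations, with values `0, …, n - 1`, of the permutations counted by
`aCount m n`. -/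
def boundedWords (m n : ℕ) : Set (List ℕ) :=
  {l | l.Perm (List.range n) ∧ ListAvoids132 l ∧ l.IsChain fun a b => Nat.dist a b ≤ m}

/-- The one-line notation of a permutation, with values `0, …, n - 1`. -/
def oneLine {n : ℕ} (π : Equiv.Perm (Fin n)) : List ℕ :=
  List.ofFn fun i => (π i : ℕ)

theorem oneLine_injective {n : ℕ} : Function.Injective (oneLine (n := n)) := fun _ _ h =>
  Equiv.ext fun i => Fin.ext (congrFun (List.ofFn_injective h) i)

theorem oneLine_perm_range {n : ℕ} (π : Equiv.Perm (Fin n)) :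
    (oneLine π).Perm (List.range n) := by
  simpa only [oneLine, List.ofFn_eq_map, List.map_coe_finRange_eq_range, Function.comp_def]
    using π.ofFn_comp_perm ((↑) : Fin n → ℕ)

theorem exists_oneLine_eq {n : ℕ} {l : List ℕ} (hl : l.Perm (List.range n)) :
    ∃ π : Equiv.Perm (Fin n), oneLine π = l := by
  obtain rfl : l.length = n := by simpa using hl.length_eq
  have hlt (i : Fin l.length) : l[i] < l.length :=
    List.mem_range.1 (hl.mem_iff.1 (List.getElem_mem i.2))
  have hinj : Function.Injective fun i : Fin l.length => (⟨l[i], hlt i⟩ : Fin l.length) :=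
    fun i j hij => Fin.ext
      ((hl.nodup_iff.2 List.nodup_range).getElem_inj_iff.1 (congrArg Fin.val hij))
  exact ⟨Equiv.ofBijective _ (Finite.injective_iff_bijective.1 hinj), by simp [oneLine]⟩

theorem listAvoids132_oneLine {n : ℕ} (π : Equiv.Perm (Fin n)) :
    ListAvoids132 (oneLine π) ↔ Avoids132 π := by
  simp only [ListAvoids132, List.triplewise_iff_getElem, oneLine, List.length_ofFn,
    List.getElem_ofFn, Avoids132, not_exists]
  constructor
  · rintro h i j k ⟨hij, hjk, hπ⟩
    exact h i j k hij hjk k.2 hπ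
  · exact fun h i j k hij hjk hk hπ =>
      h ⟨i, by omega⟩ ⟨j, by omega⟩ ⟨k, hk⟩ ⟨hij, hjk, hπ⟩

theorem isChain_oneLine {n : ℕ} (m : ℕ) (π : Equiv.Perm (Fin n)) :
    ((oneLine π).IsChain fun a b => Nat.dist a b ≤ m) ↔ MBounded m π := by
  simp only [List.isChain_iff_getElem, oneLine, List.length_ofFn, List.getElem_ofFn, MBounded,
    Nat.dist, abs_le]
  exact forall₂_congr fun i h => by omega

theorem image_oneLine (m n : ℕ) :
    oneLine '' {π : Equiv.Perm (Fin n) | Avoids132 π ∧ MBounded m π} = boundedWords m n := by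
  ext l
  constructor
  · rintro ⟨π, ⟨havoid, hbound⟩, rfl⟩
    exact ⟨oneLine_perm_range π, (listAvoids132_oneLine π).2 havoid,
      (isChain_oneLine m π).2 hbound⟩
  · rintro ⟨hperm, havoid, hchain⟩
    obtain ⟨π, rfl⟩ := exists_oneLine_eq hperm
    exact ⟨π, ⟨(listAvoids132_oneLine π).1 havoid, (isChain_oneLine m π).1 hchain⟩, rfl⟩

theorem listAvoids132_map_add_left (r : ℕ) (l : List ℕ) :
    ListAvoids132 (l.map (r + ·)) ↔ ListAvoids132 l := by
  simp only [ListAvoids132, List.triplewise_map, Nat.add_lt_add_iff_left]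

theorem listAvoids132_append_cons_iff {X R : List ℕ} {M : ℕ} (hX : ∀ x ∈ X, x < M)
    (hR : ∀ y ∈ R, y < M) (hdisj : List.Disjoint X R) :
    ListAvoids132 (X ++ M :: R) ↔
      ListAvoids132 X ∧ ListAvoids132 R ∧ ∀ x ∈ X, ∀ y ∈ R, y < x := by
  simp only [ListAvoids132, List.triplewise_append, List.triplewise_cons, List.pairwise_cons,
    List.forall_mem_cons]
  constructor
  · rintro ⟨hX', ⟨-, hR'⟩, hXR, -⟩
    refine ⟨hX', hR', fun x hx y hy => ?_⟩
    have hne : x ≠ y := fun h => hdisj hx (h ▸ hy)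
    have := (hXR x hx).1 y hy
    have := hR y hy
    omega
  · rintro ⟨hX', hR', hlt⟩
    refine ⟨hX', ⟨?_, hR'⟩, fun x hx => ⟨fun y hy => ?_, ?_⟩, ?_, fun y hy => ?_⟩
    · exact List.pairwise_of_forall_mem_list fun b _ c hc => by have := hR c hc; omega
    · have := hlt x hx y hy
      omega
    · exact List.pairwise_of_forall_mem_list fun b _ c hc => by have := hlt x hx c hc; omega
    · exact List.pairwise_of_forall_mem_list fun _ _ c hc => by have := hX c hc; omega
    · exact List.pairwise_of_forall_mem_list fun b hb _ _ => by have := hlt b hb y hy; omega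

theorem perm_range_of_append_perm_range {X R : List ℕ} {k : ℕ}
    (hperm : (X ++ R).Perm (List.range k)) (hlt : ∀ x ∈ X, ∀ y ∈ R, y < x) :
    R.Perm (List.range R.length) ∧
      ∃ Y : List ℕ, Y.Perm (List.range Y.length) ∧ X = Y.map (R.length + ·) := by
  obtain rfl : R.length + X.length = k := by
    simpa [Nat.add_comm] using hperm.length_eq
  have hR := R.perm_insertionSort (· ≤ ·)
  have hX := X.perm_insertionSort (· ≤ ·)
  have hsorted : (R.insertionSort (· ≤ ·) ++ X.insertionSort (· ≤ ·)).Pairwise (· ≤ ·) :=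
    List.pairwise_append.2 ⟨List.pairwise_insertionSort _ _, List.pairwise_insertionSort _ _,
      fun y hy x hx => (hlt x (hX.mem_iff.1 hx) y (hR.mem_iff.1 hy)).le⟩
  have heq := ((hR.append hX).trans (List.perm_append_comm.trans hperm)).eq_of_pairwise'
    hsorted List.pairwise_le_range
  rw [List.range_add] at heq
  obtain ⟨hR', hX'⟩ := List.append_inj heq (by simp)
  obtain ⟨Y, rfl, hY⟩ := (congrFun₂ (List.eq_map_comp_perm (R.length + ·)) X _).mpr (hX' ▸ hX.symm)
  exact ⟨hR' ▸ hR.symm, Y, by simpa using hY, rfl⟩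

/-! ### Binary trees -/

/-- The 132-avoiding word on `0, …, n - 1` of a binary tree with `n` nodes. In a 132-avoiding word
every entry before the maximum exceeds every entry after it, so the two sides of the maximum are
words of this kind up to translation. They become the two subtrees. -/
def treeWord : BinaryTree Unit → List ℕ
  | .nil => []
  | .node _ L R => (treeWord L).map (R.numNodes + ·) ++ (R.numNodes + L.numNodes) :: treeWord R

theorem treeWord_perm_range (t : BinaryTree Unit) :
    (treeWord t).Perm (List.range t.numNodes) := by
  induction t using unitRecOn with
  | base => simp [treeWord]
  | ind L R hL hR =>
    have hrange : List.range (L △ R).numNodes = (List.range R.numNodes ++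
        (List.range L.numNodes).map (R.numNodes + ·)) ++ [R.numNodes + L.numNodes] := by
      rw [numNodes, add_comm L.numNodes, List.range_succ, List.range_add]
    rw [hrange, treeWord]
    exact List.perm_middle.trans (((hL.map _).append hR).trans List.perm_append_comm |>.cons _)
      |>.trans (List.perm_append_singleton _ _).symm

theorem length_treeWord (t : BinaryTree Unit) : (treeWord t).length = t.numNodes := by
  simpa using (treeWord_perm_range t).length_eq

theorem lt_numNodes_of_mem_treeWord {t : BinaryTree Unit} {x : ℕ} (hx : x ∈ treeWord t) :
    x < t.numNodes :=
  List.mem_range.1 ((treeWord_perm_range t).mem_iff.1 hx)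

theorem lt_of_mem_map_add_treeWord {L : BinaryTree Unit} {r x : ℕ}
    (hx : x ∈ (treeWord L).map (r + ·)) : r ≤ x ∧ x < r + L.numNodes := by
  obtain ⟨y, hy, rfl⟩ := List.mem_map.1 hx
  have := lt_numNodes_of_mem_treeWord hy
  omega

theorem listAvoids132_treeWord (t : BinaryTree Unit) : ListAvoids132 (treeWord t) := by
  induction t using unitRecOn with
  | base => exact .nil
  | ind L R hL hR =>
    have hlt : ∀ x ∈ (treeWord L).map (R.numNodes + ·), ∀ y ∈ treeWord R, y < x :=
      fun x hx y hy =>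
        (lt_numNodes_of_mem_treeWord hy).trans_le (lt_of_mem_map_add_treeWord hx).1
    refine (listAvoids132_append_cons_iff (fun x hx => (lt_of_mem_map_add_treeWord hx).2)
      (fun y hy => (lt_numNodes_of_mem_treeWord hy).trans_le (Nat.le_add_right _ _))
      (fun x hx hx' => (hlt x hx x hx').false)).2 ⟨?_, hR, hlt⟩
    exact (listAvoids132_map_add_left _ _).2 hL

theorem treeWord_injective : Function.Injective treeWord := by
  intro s
  induction s using unitRecOn with
  | base =>
    rintro (_ | ⟨_, L, R⟩) h
    · rfl
    · simp [treeWord] at h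
  | ind L R hL hR =>
    rintro (_ | ⟨_, L', R'⟩) h
    · simp [treeWord] at h
    have hsize : R.numNodes + L.numNodes = R'.numNodes + L'.numNodes := by
      have := congrArg List.length h
      simp only [length_treeWord, numNodes] at this
      omega
    rw [treeWord, treeWord, hsize, List.append_cons_inj_of_notMem] at h
    · obtain ⟨hmap, -, hword⟩ := h
      obtain rfl := hR hword
      obtain rfl := hL (List.map_injective_iff.2 (add_right_injective _) hmap)
      rfl
    · exact fun hx => (hsize ▸ (lt_of_mem_map_add_treeWord hx).2).false
    · exact fun hx => by have := lt_numNodes_of_mem_treeWord hx; omega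

theorem exists_treeWord_eq {n : ℕ} {l : List ℕ} (hperm : l.Perm (List.range n))
    (havoid : ListAvoids132 l) : ∃ t, treeWord t = l := by
  induction n using Nat.strong_induction_on generalizing l with
  | _ n ih =>
  rcases n with _ | k
  · exact ⟨.nil, by simpa [treeWord, eq_comm] using hperm⟩
  obtain ⟨X, R, rfl⟩ := List.append_of_mem (hperm.mem_iff.2 List.self_mem_range_succ)
  have hXR : (X ++ R).Perm (List.range k) := by
    rw [List.range_succ] at hperm
    exact (List.perm_middle.symm.trans (hperm.trans (List.perm_append_singleton _ _))).cons_inv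
  have hlt (x : ℕ) (hx : x ∈ X ++ R) : x < k := List.mem_range.1 (hXR.mem_iff.1 hx)
  have hdisj : List.Disjoint X R :=
    List.disjoint_of_nodup_append (hXR.nodup_iff.2 List.nodup_range)
  obtain ⟨hXavoid, hRavoid, hRX⟩ := (listAvoids132_append_cons_iff
    (fun x hx => hlt x (List.mem_append_left R hx))
    (fun y hy => hlt y (List.mem_append_right X hy)) hdisj).1 havoid
  obtain ⟨hRperm, Y, hYperm, rfl⟩ := perm_range_of_append_perm_range hXR hRX
  have hlen : Y.length + R.length = k := by simpa using hXR.length_eq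
  obtain ⟨tL, rfl⟩ := ih Y.length (by omega) hYperm ((listAvoids132_map_add_left _ _).1 hXavoid)
  obtain ⟨tR, rfl⟩ := ih R.length (by omega) hRperm hRavoid
  simp only [length_treeWord] at hlen
  exact ⟨tL △ tR, by simp only [treeWord, length_treeWord, ← hlen, add_comm]⟩

/-- The number of nodes of a tree minus the first letter of its word. -/
def firstGap : BinaryTree Unit → ℕ
  | .nil => 0
  | .node _ L _ => firstGap L + 1

/-- The number of nodes of a tree minus the last letter of its word. -/
def lastGap : BinaryTree Unit → ℕ
  | .nil => 0
  | .node _ L R => if R = .nil then 1 else lastGap R + L.numNodes + 1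

/-- The condition on a tree that consecutive letters of its word differ by at most `m`, in recursive
form: the last two clauses compare the maximum with the letters before and after it. -/
def TreeBounded (m : ℕ) : BinaryTree Unit → Prop
  | .nil => True
  | .node _ L R =>
    TreeBounded m L ∧ TreeBounded m R ∧ lastGap L ≤ m ∧ (R ≠ .nil → firstGap R + L.numNodes ≤ m)

theorem firstGap_pos {t : BinaryTree Unit} (ht : t ≠ .nil) : 0 < firstGap t := by
  cases t <;> simp_all [firstGap]

theorem lastGap_pos {t : BinaryTree Unit} (ht : t ≠ .nil) : 0 < lastGap t := by
  cases t with
  | nil => contradiction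
  | node _ L R => rw [lastGap]; split_ifs <;> omega

theorem firstGap_le_numNodes (t : BinaryTree Unit) : firstGap t ≤ t.numNodes := by
  induction t using unitRecOn with
  | base => rfl
  | ind L R hL _ => simp only [firstGap, numNodes]; omega

theorem lastGap_le_numNodes (t : BinaryTree Unit) : lastGap t ≤ t.numNodes := by
  induction t using unitRecOn with
  | base => rfl
  | ind L R _ hR => simp only [lastGap, numNodes]; split_ifs <;> omega

theorem head?_treeWord {t : BinaryTree Unit} (ht : t ≠ .nil) :
    (treeWord t).head? = some (t.numNodes - firstGap t) := by
  induction t using unitRecOn with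
  | base => contradiction
  | ind L R hL _ =>
    by_cases hnil : L = .nil
    · simp [hnil, treeWord, firstGap, numNodes]
    · have := firstGap_le_numNodes L
      simp [treeWord, firstGap, numNodes, hL hnil]
      omega

theorem getLast?_treeWord {t : BinaryTree Unit} (ht : t ≠ .nil) :
    (treeWord t).getLast? = some (t.numNodes - lastGap t) := by
  induction t using unitRecOn with
  | base => contradiction
  | ind L R _ hR =>
    by_cases hnil : R = .nil
    · simp [hnil, treeWord, lastGap, numNodes]
    · have := lastGap_le_numNodes R
      simp [treeWord, lastGap, numNodes, List.getLast?_append, List.getLast?_cons, hnil, hR hnil]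
      omega

theorem isChain_treeWord (m : ℕ) (t : BinaryTree Unit) :
    ((treeWord t).IsChain fun a b => Nat.dist a b ≤ m) ↔ TreeBounded m t := by
  induction t using unitRecOn with
  | base => simp [treeWord, TreeBounded]
  | ind L R hL hR =>
    have hbefore : (∀ x ∈ ((treeWord L).map (R.numNodes + ·)).getLast?,
        ∀ y ∈ ((R.numNodes + L.numNodes) :: treeWord R).head?, Nat.dist x y ≤ m) ↔
        lastGap L ≤ m := by
      by_cases hnil : L = .nil
      · simp [hnil, treeWord, lastGap]
      · have := lastGap_le_numNodes L
        simp only [List.getLast?_map, getLast?_treeWord hnil, List.head?_cons, Option.map_some,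
          Option.mem_some, forall_eq', Nat.dist]
        omega
    have hafter : (∀ y ∈ (treeWord R).head?, Nat.dist (R.numNodes + L.numNodes) y ≤ m) ↔
        (R ≠ .nil → firstGap R + L.numNodes ≤ m) := by
      by_cases hnil : R = .nil
      · simp [hnil, treeWord]
      · have := firstGap_le_numNodes R
        simp only [head?_treeWord hnil, Option.mem_some, forall_eq', Nat.dist, ne_eq, hnil,
          not_false_eq_true, true_imp_iff]
        omega
    simp only [treeWord, TreeBounded, List.isChain_append, List.isChain_map, List.isChain_cons,
      Nat.dist_add_add_left, hbefore, hafter, hL, hR]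
    tauto

theorem image_treeWord (m n : ℕ) :
    treeWord '' {t | t.numNodes = n ∧ TreeBounded m t} = boundedWords m n := by
  ext l
  constructor
  · rintro ⟨t, ⟨rfl, hbound⟩, rfl⟩
    exact ⟨treeWord_perm_range t, listAvoids132_treeWord t, (isChain_treeWord m t).2 hbound⟩
  · rintro ⟨hperm, havoid, hchain⟩
    obtain ⟨t, rfl⟩ := exists_treeWord_eq hperm havoid
    exact ⟨t, ⟨by simpa [length_treeWord] using hperm.length_eq, (isChain_treeWord m t).1 hchain⟩,
      rfl⟩

open Classical in
/-- The binary trees with `n` nodes whose words are counted by `aCount m n`. -/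
noncomputable def boundedTrees (m n : ℕ) : Finset (BinaryTree Unit) :=
  {t ∈ treesOfNumNodesEq n | TreeBounded m t}

theorem mem_boundedTrees {m n : ℕ} {t : BinaryTree Unit} :
    t ∈ boundedTrees m n ↔ t.numNodes = n ∧ TreeBounded m t := by
  simp [boundedTrees, mem_treesOfNumNodesEq]

theorem aCount_eq_card_boundedTrees (m n : ℕ) : aCount m n = (boundedTrees m n).card := by
  calc aCount m n = {π : Equiv.Perm (Fin n) | Avoids132 π ∧ MBounded m π}.ncard := rfl
    _ = (boundedWords m n).ncard := by
      rw [← image_oneLine, Set.ncard_image_of_injective _ oneLine_injective]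
    _ = {t | t.numNodes = n ∧ TreeBounded m t}.ncard := by
      rw [← image_treeWord, Set.ncard_image_of_injective _ treeWord_injective]
    _ = (boundedTrees m n).card := by
      rw [← Set.ncard_coe_finset]
      exact congrArg Set.ncard (Set.ext fun t => mem_boundedTrees.symm)

/-! ### Monotonicity and Catalan bounds for the counts -/

theorem aCount_le_catalan (m n : ℕ) : aCount m n ≤ catalan n := by
  classical
  rw [aCount_eq_card_boundedTrees, ← treesOfNumNodesEq_card_eq_catalan]
  exact Finset.card_filter_le _ _

theorem aCount_le_aCount_succ_left (m n : ℕ) : aCount m n ≤ aCount (m + 1) n :=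
  Nat.card_mono (Set.toFinite {π : Equiv.Perm (Fin n) | Avoids132 π ∧ MBounded (m + 1) π})
    fun _ hπ => ⟨hπ.1, fun i h => (hπ.2 i h).trans (by simp)⟩

theorem TreeBounded.lastGap_le_one {m : ℕ} {t : BinaryTree Unit} (ht : TreeBounded m t)
    (hgap : m < firstGap t) : lastGap t ≤ 1 := by
  rcases t with _ | ⟨_, L, R⟩
  · exact Nat.zero_le 1
  · by_cases hR : R = .nil
    · simp [lastGap, hR]
    · have := ht.2.2.2 hR
      have := firstGap_pos hR
      have := firstGap_le_numNodes L
      simp only [firstGap] at hgap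
      omega

theorem aCount_monotone {m : ℕ} (hm : 1 ≤ m) : Monotone (aCount m) := by
  refine monotone_nat_of_le_succ fun n => ?_
  rw [aCount_eq_card_boundedTrees, aCount_eq_card_boundedTrees]
  refine Finset.card_le_card_of_injOn
    (fun t => if firstGap t ≤ m then .nil △ t else t △ .nil) (fun t ht => ?_) ?_
  · obtain ⟨rfl, hbound⟩ := mem_boundedTrees.1 ht
    simp only [Finset.mem_coe, mem_boundedTrees]
    split_ifs with hgap
    · exact ⟨by simp [numNodes], trivial, hbound, Nat.zero_le m, fun _ => hgap⟩
    · exact ⟨by simp [numNodes], hbound, trivial,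
        (hbound.lastGap_le_one (not_le.1 hgap)).trans hm, fun h => absurd rfl h⟩
  · intro s _ t _ h
    dsimp only at h
    split_ifs at h <;> grind [firstGap]

theorem aCount_pos {m : ℕ} (hm : 1 ≤ m) (n : ℕ) : 0 < aCount m n := by
  refine lt_of_lt_of_le ?_ (aCount_monotone hm (Nat.zero_le n))
  rw [aCount_eq_card_boundedTrees]
  exact Finset.card_pos.2 ⟨.nil, mem_boundedTrees.2 ⟨rfl, trivial⟩⟩

theorem treeBounded_of_numNodes_le {m : ℕ} {t : BinaryTree Unit} (ht : t.numNodes ≤ m + 1) :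
    TreeBounded m t := by
  induction t using unitRecOn with
  | base => trivial
  | ind L R hL hR =>
    rw [numNodes] at ht
    have := lastGap_le_numNodes L
    have := firstGap_le_numNodes R
    exact ⟨hL (by omega), hR (by omega), by omega, fun _ => by omega⟩

theorem card_boundedTrees_firstGap_mul_catalan_le {m : ℕ} (hm : 1 ≤ m) (n : ℕ) :
    {t ∈ boundedTrees m n | firstGap t = 1}.card * catalan (m - 1) ≤
      {t ∈ boundedTrees m (n + (m + 1)) | firstGap t = 1}.card := by
  rw [← treesOfNumNodesEq_card_eq_catalan, ← Finset.card_product]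
  refine Finset.card_le_card_of_injOn (fun p => .nil △ (p.2 △ p.1)) ?_ ?_
  · rintro ⟨t, L⟩ hp
    simp only [Finset.coe_product, Set.mem_prod, Finset.mem_coe, Finset.mem_filter,
      mem_boundedTrees, mem_treesOfNumNodesEq] at hp
    obtain ⟨⟨⟨rfl, ht⟩, hgap⟩, hL⟩ := hp
    have := lastGap_le_numNodes L
    have := firstGap_le_numNodes L
    simp only [Finset.coe_filter, Set.mem_ofPred_eq, mem_boundedTrees, numNodes, TreeBounded,
      firstGap, lastGap]
    exact ⟨⟨by omega, trivial, ⟨treeBounded_of_numNodes_le (by omega), ht, by omega,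
      fun _ => by omega⟩, by omega, fun _ => by omega⟩, trivial⟩
  · rintro ⟨t, L⟩ _ ⟨t', L'⟩ _ h
    simp_all

theorem catalan_pow_le_card_boundedTrees_firstGap {m : ℕ} (hm : 1 ≤ m) (q : ℕ) :
    catalan (m - 1) ^ q ≤ {t ∈ boundedTrees m (q * (m + 1) + 1) | firstGap t = 1}.card := by
  induction q with
  | zero =>
    exact Finset.card_pos.2 ⟨.nil △ .nil, by
      simp [mem_boundedTrees, numNodes, TreeBounded, firstGap, lastGap]⟩
  | succ q ih =>
    rw [pow_succ, Nat.succ_mul, Nat.add_right_comm]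
    exact (Nat.mul_le_mul_right _ ih).trans (card_boundedTrees_firstGap_mul_catalan_le hm _)

theorem catalan_pow_le_aCount {m : ℕ} (hm : 1 ≤ m) (q : ℕ) :
    catalan (m - 1) ^ q ≤ aCount m (q * (m + 1) + 1) :=
  (aCount_eq_card_boundedTrees m _).symm ▸
    (catalan_pow_le_card_boundedTrees_firstGap hm q).trans (Finset.card_filter_le _ _)

/-! ### Cutting a tree -/

/-- The first subtree with at most `i` nodes on the path that starts at the root and enters the
right subtree whenever that is nonempty, and the left one otherwise. -/
def core (i : ℕ) : BinaryTree Unit → BinaryTree Unit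
  | .nil => .nil
  | .node a L R =>
    if (BinaryTree.node a L R).numNodes ≤ i then .node a L R
    else if R = .nil then core i L else core i R

/-- What is left of a tree when `core i` is replaced by a single node. -/
def trunk (i : ℕ) : BinaryTree Unit → BinaryTree Unit
  | .nil => .nil △ .nil
  | .node a L R =>
    if (BinaryTree.node a L R).numNodes ≤ i then .nil △ .nil
    else if R = .nil then trunk i L △ .nil else L △ trunk i R

theorem trunk_ne_nil (i : ℕ) (t : BinaryTree Unit) : trunk i t ≠ .nil := by
  cases t with
  | nil => simp [trunk]
  | node _ L R => rw [trunk]; split_ifs <;> simp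

theorem core_of_numNodes_le {i : ℕ} {t : BinaryTree Unit} (ht : t.numNodes ≤ i) :
    core i t = t := by
  cases t with
  | nil => rfl
  | node _ L R => rw [core, if_pos ht]

theorem numNodes_core_le (i : ℕ) (t : BinaryTree Unit) : (core i t).numNodes ≤ i := by
  induction t using unitRecOn with
  | base => exact Nat.zero_le i
  | ind L R hL hR => rw [core]; split_ifs <;> assumption

theorem numNodes_core_add_numNodes_trunk (i : ℕ) (t : BinaryTree Unit) :
    (core i t).numNodes + (trunk i t).numNodes = t.numNodes + 1 := by
  induction t using unitRecOn with
  | base => rfl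
  | ind L R hL hR => rw [core, trunk]; split_ifs <;> simp_all [numNodes] <;> omega

theorem TreeBounded.core {m : ℕ} {t : BinaryTree Unit} (ht : TreeBounded m t) (i : ℕ) :
    TreeBounded m (core i t) := by
  induction t using unitRecOn with
  | base => trivial
  | ind L R hL hR =>
    rw [_root_.core]
    split_ifs
    exacts [ht, hL ht.1, hR ht.2.1]

theorem firstGap_trunk_le {i : ℕ} (hi : 1 ≤ i) (t : BinaryTree Unit) :
    firstGap (trunk i t) ≤ max 1 (firstGap t) := by
  induction t using unitRecOn with
  | base => simp [trunk, firstGap]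
  | ind L R hL _ =>
    rw [trunk]
    split_ifs with hle hnil
    · simp [firstGap]
    · have hL0 : L ≠ .nil := by
        rintro rfl
        exact hle (by simpa [hnil, numNodes] using hi)
      have := firstGap_pos hL0
      simp only [firstGap]
      omega
    · exact le_max_right _ _

theorem lastGap_trunk_le (i : ℕ) (t : BinaryTree Unit) :
    lastGap (trunk i t) ≤ max 1 (lastGap t) := by
  induction t using unitRecOn with
  | base => simp [trunk, lastGap]
  | ind L R _ hR =>
    rw [trunk]
    split_ifs with _ hnil
    · simp [lastGap]
    · simp [lastGap]
    · have := lastGap_pos hnil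
      simp only [lastGap, trunk_ne_nil, hnil, if_false]
      omega

theorem TreeBounded.trunk {m : ℕ} (hm : 1 ≤ m) {t : BinaryTree Unit} (ht : TreeBounded m t)
    {i : ℕ} (hi : 1 ≤ i) : TreeBounded m (trunk i t) := by
  induction t using unitRecOn with
  | base => exact ⟨trivial, trivial, Nat.zero_le m, fun h => absurd rfl h⟩
  | ind L R hL hR =>
    obtain ⟨hLb, hRb, hbefore, hafter⟩ := ht
    rw [_root_.trunk]
    split_ifs with _ hnil
    · exact ⟨trivial, trivial, Nat.zero_le m, fun h => absurd rfl h⟩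
    · exact ⟨hL hLb, trivial, (lastGap_trunk_le i L).trans (max_le hm hbefore),
        fun h => absurd rfl h⟩
    · refine ⟨hLb, hR hRb, hbefore, fun _ => ?_⟩
      have := firstGap_trunk_le hi R
      have := firstGap_pos hnil
      have := hafter hnil
      omega

-- One step of the path removes at most `m` nodes: a nonempty right subtree forces its left sibling
-- to have fewer than `m`.
theorem TreeBounded.lt_numNodes_core_add {m : ℕ} (hm : 1 ≤ m) {t : BinaryTree Unit}
    (ht : TreeBounded m t) {i : ℕ} (hi : i ≤ t.numNodes) : i < (_root_.core i t).numNodes + m := by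
  induction t using unitRecOn with
  | base => simp_all [numNodes]; omega
  | ind L R hL hR =>
    have descend {s : BinaryTree Unit} (hs : (L △ R).numNodes ≤ s.numNodes + m)
        (hlt : i < (L △ R).numNodes)
        (ih : i ≤ s.numNodes → i < (_root_.core i s).numNodes + m) :
        i < (_root_.core i s).numNodes + m := by
      rcases le_total i s.numNodes with h | h
      · exact ih h
      · rw [core_of_numNodes_le h]
        omega
    rw [_root_.core]
    split_ifs with hle hnil
    · omega
    · exact descend (by simp only [hnil, numNodes]; omega) (not_le.1 hle) (hL ht.1)
    · refine descend ?_ (not_le.1 hle) (hR ht.2.1)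
      have := firstGap_pos hnil
      have := ht.2.2.2 hnil
      rw [numNodes]
      omega

/-- The inverse of cutting: `graft u` replaces by `u` the node at the end of the path followed by
`core`. -/
def graft (u : BinaryTree Unit) : BinaryTree Unit → BinaryTree Unit
  | .nil => u
  | .node _ L R =>
    if R = .nil then (if L = .nil then u else graft u L △ .nil) else L △ graft u R

theorem graft_core_trunk (i : ℕ) (t : BinaryTree Unit) : graft (core i t) (trunk i t) = t := by
  induction t using unitRecOn with
  | base => rfl
  | ind L R hL hR => rw [core, trunk]; split_ifs <;> simp_all [graft, trunk_ne_nil]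

theorem aCount_add_le {m i : ℕ} (hm : 1 ≤ m) (hi : 1 ≤ i) (j : ℕ) :
    aCount m (i + j) ≤ m * (aCount m i * aCount m (j + m)) := by
  let pairs := (Finset.range m).sigma fun s =>
    boundedTrees m (i - s) ×ˢ boundedTrees m (j + s + 1)
  have hcut : (boundedTrees m (i + j)).card ≤ pairs.card := by
    refine Finset.card_le_card_of_injOn
      (fun t => ⟨i - (core i t).numNodes, core i t, trunk i t⟩) (fun t ht => ?_) ?_
    · obtain ⟨hsize, hbound⟩ := mem_boundedTrees.1 ht
      have := hbound.lt_numNodes_core_add hm (hsize ▸ Nat.le_add_right i j)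
      have := numNodes_core_le i t
      have := numNodes_core_add_numNodes_trunk i t
      simp only [pairs, Finset.mem_coe, Finset.mem_sigma, Finset.mem_range, Finset.mem_product,
        mem_boundedTrees]
      exact ⟨by omega, ⟨by omega, hbound.core i⟩, by omega, hbound.trunk hm hi⟩
    · intro s _ t _ h
      simp only [Sigma.mk.injEq, heq_eq_eq, Prod.mk.injEq] at h
      rw [← graft_core_trunk i s, ← graft_core_trunk i t, h.2.1, h.2.2]
  calc aCount m (i + j) ≤ pairs.card := aCount_eq_card_boundedTrees m (i + j) ▸ hcut
    _ = ∑ s ∈ Finset.range m, aCount m (i - s) * aCount m (j + s + 1) := by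
      simp only [pairs, Finset.card_sigma, Finset.card_product, aCount_eq_card_boundedTrees]
    _ ≤ ∑ _s ∈ Finset.range m, aCount m i * aCount m (j + m) :=
      Finset.sum_le_sum fun s hs => by
        have := Finset.mem_range.1 hs
        exact Nat.mul_le_mul (aCount_monotone hm (by omega)) (aCount_monotone hm (by omega))
    _ = m * (aCount m i * aCount m (j + m)) := by simp

/-! ### Growth constants -/

theorem tendsto_div_of_tendsto_add_div {u : ℕ → ℝ} {d : ℕ} {L : ℝ}
    (h : Tendsto (fun n : ℕ => u (n + d) / n) atTop (𝓝 L)) :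
    Tendsto (fun n : ℕ => u n / n) atTop (𝓝 L) := by
  rw [← tendsto_add_atTop_iff_nat d, ← mul_one L]
  refine (h.mul (tendsto_natCast_div_add_atTop (d : ℝ))).congr' ?_
  filter_upwards [eventually_ne_atTop 0] with n hn
  rw [div_mul_div_cancel₀ (Nat.cast_ne_zero.2 hn), Nat.cast_add]

theorem exists_tendsto_rpow_inv_of_le_mul_mul {a : ℕ → ℝ} {c : ℝ} {d : ℕ} (ha : ∀ n, 1 ≤ a n)
    (hmul : ∀ i j, a (i + j + d) ≤ c * (a (i + d) * a (j + d))) :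
    ∃ α, Tendsto (fun n : ℕ => a n ^ (n : ℝ)⁻¹) atTop (𝓝 α) ∧
      ∀ k ≠ 0, α ^ k ≤ c * a (k + d) := by
  have ha0 (n : ℕ) : 0 < a n := one_pos.trans_le (ha n)
  have hc : 0 < c :=
    pos_of_mul_pos_left ((ha0 _).trans_le (hmul 0 0)) (mul_pos (ha0 _) (ha0 _)).le
  have hca0 (n : ℕ) : 0 < c * a (n + d) := mul_pos hc (ha0 _)
  let w (n : ℕ) : ℝ := Real.log (c * a (n + d))
  have hw (n : ℕ) : w n = Real.log c + Real.log (a (n + d)) := Real.log_mul hc.ne' (ha0 _).ne'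
  have hsub : Subadditive w := fun i j => by
    rw [← Real.log_mul (hca0 i).ne' (hca0 j).ne']
    refine Real.log_le_log (hca0 _) ?_
    calc c * a (i + j + d) ≤ c * (c * (a (i + d) * a (j + d))) := by gcongr; exact hmul i j
      _ = c * a (i + d) * (c * a (j + d)) := by ring
  have hzero : Tendsto (fun n : ℕ => Real.log c / n) atTop (𝓝 0) :=
    tendsto_const_div_atTop_nhds_zero_nat _
  have hbdd : BddBelow (Set.range fun n : ℕ => w n / n) := by
    obtain ⟨B, hB⟩ := hzero.bddBelow_range
    refine ⟨B, Set.forall_mem_range.2 fun n => (hB (Set.mem_range_self n)).trans ?_⟩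
    gcongr
    exact (hw n).symm ▸ le_add_of_nonneg_right (Real.log_nonneg (ha _))
  refine ⟨Real.exp hsub.lim, ?_, fun k hk => ?_⟩
  · have hshift : Tendsto (fun n : ℕ => Real.log (a (n + d)) / n) atTop (𝓝 hsub.lim) := by
      simpa [hw, add_div] using (hsub.tendsto_lim hbdd).sub hzero
    have hlog := tendsto_div_of_tendsto_add_div (u := fun n => Real.log (a n)) hshift
    exact ((Real.continuous_exp.tendsto _).comp hlog).congr fun n =>
      (Real.rpow_def_of_pos (ha0 n) _).symm
  · rw [← Real.exp_nat_mul, ← Real.le_log_iff_exp_le (hca0 k), mul_comm]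
    exact (le_div_iff₀ (by positivity)).1 (hsub.lim_le_div hbdd hk)

theorem rpow_inv_le_of_tendsto_of_pow_le {a : ℕ → ℝ} {α b : ℝ} {d r : ℕ} (hb : 0 ≤ b)
    (hd : d ≠ 0) (hα : Tendsto (fun n : ℕ => a n ^ (n : ℝ)⁻¹) atTop (𝓝 α))
    (hpow : ∀ q, b ^ q ≤ a (q * d + r)) : b ^ (d : ℝ)⁻¹ ≤ α := by
  have hd' : (d : ℝ) ≠ 0 := Nat.cast_ne_zero.2 hd
  have hindex : Tendsto (fun q : ℕ => q * d + r) atTop atTop :=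
    tendsto_atTop_mono (fun q => (Nat.le_mul_of_pos_right q (Nat.pos_of_ne_zero hd)).trans
      (Nat.le_add_right _ r)) tendsto_id
  have hexp : Tendsto (fun q : ℕ => (q : ℝ) * ((q * d + r : ℕ) : ℝ)⁻¹) atTop (𝓝 (d : ℝ)⁻¹) := by
    have := (tendsto_natCast_div_add_atTop (r / d : ℝ)).mul_const (d : ℝ)⁻¹
    rw [one_mul] at this
    refine this.congr fun q => ?_
    push_cast
    rw [← div_eq_mul_inv, ← div_eq_mul_inv, div_div, add_mul, div_mul_cancel₀ _ hd']
  have hroot : Tendsto (fun q : ℕ => b ^ ((q : ℝ) * ((q * d + r : ℕ) : ℝ)⁻¹)) atTop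
      (𝓝 (b ^ (d : ℝ)⁻¹)) :=
    (Real.continuousAt_const_rpow' (inv_ne_zero hd')).tendsto.comp hexp
  refine le_of_tendsto_of_tendsto' hroot (hα.comp hindex) fun q => ?_
  rw [Real.rpow_mul hb, Real.rpow_natCast]
  exact Real.rpow_le_rpow (pow_nonneg hb q) (hpow q) (by positivity)

/-- The exponential growth constant `α_m` of the `m`-bounded 132-avoiding permutations, a limit that
exists for `1 ≤ m` and has a junk value for `m = 0`. -/
noncomputable def growthConstant (m : ℕ) : ℝ :=
  limUnder atTop fun n : ℕ => (aCount m n : ℝ) ^ (n : ℝ)⁻¹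

theorem exists_tendsto_aCount_rpow_inv {m : ℕ} (hm : 1 ≤ m) :
    ∃ α, Tendsto (fun n : ℕ => (aCount m n : ℝ) ^ (n : ℝ)⁻¹) atTop (𝓝 α) ∧
      ∀ k ≠ 0, α ^ k ≤ m * aCount m (k + m) := by
  refine exists_tendsto_rpow_inv_of_le_mul_mul (fun n => Nat.one_le_cast.2 (aCount_pos hm n))
    fun i j => ?_
  rw [Nat.add_right_comm]
  exact_mod_cast aCount_add_le hm (hm.trans (Nat.le_add_left m i)) j

theorem tendsto_growthConstant {m : ℕ} (hm : 1 ≤ m) :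
    Tendsto (fun n : ℕ => (aCount m n : ℝ) ^ (n : ℝ)⁻¹) atTop (𝓝 (growthConstant m)) := by
  obtain ⟨α, hα, -⟩ := exists_tendsto_aCount_rpow_inv hm
  rwa [growthConstant, hα.limUnder_eq]

theorem growthConstant_pow_le {m k : ℕ} (hm : 1 ≤ m) (hk : k ≠ 0) :
    growthConstant m ^ k ≤ m * aCount m (k + m) := by
  obtain ⟨α, hα, hpow⟩ := exists_tendsto_aCount_rpow_inv hm
  rw [growthConstant, hα.limUnder_eq]
  exact hpow k hk

theorem growthConstant_le_succ {m : ℕ} (hm : 1 ≤ m) :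
    growthConstant m ≤ growthConstant (m + 1) := by
  refine le_of_tendsto_of_tendsto' (tendsto_growthConstant hm)
    (tendsto_growthConstant (hm.trans m.le_succ)) fun n => ?_
  gcongr
  exact aCount_le_aCount_succ_left m n

theorem catalan_rpow_le_growthConstant {m : ℕ} (hm : 1 ≤ m) :
    (catalan (m - 1) : ℝ) ^ ((m : ℝ) + 1)⁻¹ ≤ growthConstant m := by
  rw [← Nat.cast_add_one]
  exact rpow_inv_le_of_tendsto_of_pow_le (Nat.cast_nonneg _) m.succ_ne_zero
    (tendsto_growthConstant hm) fun q => mod_cast catalan_pow_le_aCount hm q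

theorem succ_mul_catalan_le_four_pow (n : ℕ) : (n + 1) * catalan n ≤ 4 ^ n :=
  (succ_mul_catalan_eq_centralBinom n).trans_le n.centralBinom_le_four_pow

theorem growthConstant_lt_four {m : ℕ} (hm : 1 ≤ m) : growthConstant m < 4 := by
  let k := m * 4 ^ m
  have hk : k ≠ 0 := by positivity
  have hcatalan : m * catalan (k + m) < 4 ^ k := by
    refine lt_of_mul_lt_mul_left (a := k + m + 1) ?_ (Nat.zero_le _)
    calc (k + m + 1) * (m * catalan (k + m)) = m * ((k + m + 1) * catalan (k + m)) := by ring
      _ ≤ m * 4 ^ (k + m) := by gcongr; exact succ_mul_catalan_le_four_pow _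
      _ = k * 4 ^ k := by simp only [k]; ring
      _ < (k + m + 1) * 4 ^ k := by gcongr; omega
  refine lt_of_pow_lt_pow_left₀ k (by norm_num) ?_
  calc growthConstant m ^ k ≤ (m * aCount m (k + m) : ℕ) := mod_cast growthConstant_pow_le hm hk
    _ ≤ (m * catalan (k + m) : ℕ) := by gcongr; exact aCount_le_catalan m _
    _ < 4 ^ k := mod_cast hcatalan

theorem four_pow_le_pow_mul_catalan {k : ℕ} (hk : 1 ≤ k) :
    4 ^ (k + 2) ≤ (k + 1) ^ 7 * catalan k := by
  calc 4 ^ (k + 2) = 16 * 4 ^ k := by ring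
    _ ≤ 16 * (2 * k * ((k + 1) * catalan k)) := by
      rw [succ_mul_catalan_eq_centralBinom]
      gcongr
      exact Nat.four_pow_le_two_mul_self_mul_centralBinom k hk
    _ = 2 ^ 5 * k * (k + 1) * catalan k := by ring
    _ ≤ (k + 1) ^ 5 * (k + 1) * (k + 1) * catalan k := by gcongr <;> omega
    _ = (k + 1) ^ 7 * catalan k := by ring

theorem growthConstant_pos {m : ℕ} (hm : 1 ≤ m) : 0 < growthConstant m := by
  refine (Real.rpow_pos_of_pos ?_ _).trans_le (catalan_rpow_le_growthConstant hm)
  refine Nat.cast_pos.2 (Nat.pos_of_mul_pos_left (a := m - 1 + 1) ?_)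
  exact (succ_mul_catalan_eq_centralBinom (m - 1)).symm ▸ (m - 1).centralBinom_pos

theorem four_div_growthConstant_pow_le {m : ℕ} (hm : 2 ≤ m) :
    (4 / growthConstant m) ^ (m + 1) ≤ (m : ℝ) ^ 7 := by
  have hm1 : 1 ≤ m := one_le_two.trans hm
  have hα := growthConstant_pos hm1
  have hroot : (catalan (m - 1) : ℝ) ≤ growthConstant m ^ (m + 1) := by
    have := catalan_rpow_le_growthConstant hm1
    rwa [← Nat.cast_add_one, Real.rpow_inv_le_iff_of_pos (Nat.cast_nonneg _) hα.le
      (Nat.cast_pos.2 m.succ_pos), Real.rpow_natCast] at this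
  have hcatalan : 4 ^ (m + 1) ≤ m ^ 7 * catalan (m - 1) := by
    obtain ⟨k, rfl⟩ := Nat.exists_eq_add_of_le' hm1
    exact four_pow_le_pow_mul_catalan (by omega)
  rw [div_pow, div_le_iff₀ (pow_pos hα _)]
  calc (4 : ℝ) ^ (m + 1) ≤ m ^ 7 * catalan (m - 1) := mod_cast hcatalan
    _ ≤ m ^ 7 * growthConstant m ^ (m + 1) := by gcongr

theorem four_sub_growthConstant_le {m : ℕ} (hm : 2 ≤ m) :
    4 - growthConstant m ≤ 28 * Real.log m / m := by
  have hα := growthConstant_pos (one_le_two.trans hm)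
  have hlog : (m + 1) * Real.log (4 / growthConstant m) ≤ 7 * Real.log m := by
    simpa using Real.log_le_log (by positivity) (four_div_growthConstant_pow_le hm)
  have : (0 : ℝ) < m := by positivity
  have : 0 ≤ Real.log m := Real.log_natCast_nonneg m
  calc 4 - growthConstant m = 4 * (1 - (4 / growthConstant m)⁻¹) := by rw [inv_div]; ring
    _ ≤ 4 * Real.log (4 / growthConstant m) := by
      gcongr
      exact Real.one_sub_inv_le_log_of_pos (by positivity)
    _ ≤ 4 * (7 * Real.log m / (m + 1)) := by
      gcongr
      rwa [le_div_iff₀' (by positivity)]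
    _ ≤ 4 * (7 * Real.log m / m) := by gcongr; exact le_add_of_nonneg_right zero_le_one
    _ = 28 * Real.log m / m := by ring

theorem tendsto_growthConstant_atTop : Tendsto growthConstant atTop (𝓝 4) := by
  have hlog : Tendsto (fun m : ℕ => 28 * Real.log m / m) atTop (𝓝 0) := by
    have := (Real.isLittleO_log_id_atTop.tendsto_div_nhds_zero.comp
      tendsto_natCast_atTop_atTop).const_mul (28 : ℝ)
    simpa [mul_div_assoc] using this
  refine tendsto_of_tendsto_of_tendsto_of_le_of_le' (by simpa using hlog.const_sub 4)
    tendsto_const_nhds ?_ ?_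
  · filter_upwards [eventually_ge_atTop 2] with m hm
    exact sub_le_comm.1 (four_sub_growthConstant_le hm)
  · filter_upwards [eventually_ge_atTop 1] with m hm
    exact (growthConstant_lt_four hm).le

theorem large_adjacency_estimates :
    ∃ α : ℕ → ℝ,
      (∀ m : ℕ, 1 ≤ m →
        Filter.Tendsto (fun n : ℕ => (aCount m n : ℝ) ^ ((n : ℝ)⁻¹)) Filter.atTop
          (nhds (α m))) ∧
      (∀ m : ℕ, 1 ≤ m → α m ≤ α (m + 1)) ∧
      (∀ m : ℕ, 1 ≤ m → (catalan (m - 1) : ℝ) ^ (((m : ℝ) + 1)⁻¹) ≤ α m ∧ α m < 4) ∧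
      Filter.Tendsto α Filter.atTop (nhds 4) ∧
      (∃ K : ℝ, 0 < K ∧ ∃ M : ℕ, ∀ m : ℕ, M ≤ m →
        0 < 4 - α m ∧ 4 - α m ≤ K * Real.log m / m) :=
  ⟨growthConstant, fun _ hm => tendsto_growthConstant hm, fun _ hm => growthConstant_le_succ hm,
    fun _ hm => ⟨catalan_rpow_le_growthConstant hm, growthConstant_lt_four hm⟩,
    tendsto_growthConstant_atTop, 28, by norm_num, 2, fun _ hm =>
      ⟨sub_pos.2 (growthConstant_lt_four (one_le_two.trans hm)), four_sub_growthConstant_le hm⟩⟩
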